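/- arXiv:1207.3739 — 2 statements merged into one kernel-verified Lean document; each statement's English description precedes it below -/
import Mathlib

section
/- A finite-dimensional left Leibniz algebra A is nilpotent if and only if the only subalgebra K of A with K + A² = A is K = A itself. -/
open Polynomial LinearMap

/-- A (left) Leibniz algebra structure on the `K`-vector space `A`:
a bilinear multiplication satisfying `x(yz) = (xy)z + y(xz)`. -/
structure LeibnizMul (K A : Type*) [Field K] [AddCommGroup A] [Module K A] where
  mul : A →ₗ[K] A →ₗ[K] A
  leibniz : ∀ x y z, mul x (mul y z) = mul (mul x y) z + mul y (mul x z)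

namespace LeibnizMul

variable {K A : Type*} [Field K] [AddCommGroup A] [Module K A]

/-- The product of two subspaces: the span of all products `s·t`, `s ∈ S`, `t ∈ T`. -/
def mulSub (m : LeibnizMul K A) (S T : Submodule K A) : Submodule K A :=
  Submodule.span K (Set.image2 (fun x y => m.mul x y) (S : Set A) (T : Set A))

/-- Relative lower central series of the subalgebra `S`: `lcsIn m S n = S^(n+1)`,
i.e. `lcsIn m S 0 = S` and `lcsIn m S (n+1) = S · (lcsIn m S n)`. -/
def lcsIn (m : LeibnizMul K A) (S : Submodule K A) : ℕ → Submodule K A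
  | 0 => S
  | (n+1) => m.mulSub S (m.lcsIn S n)

/-- `A` is nilpotent: some term of the lower central series vanishes. -/
def IsNilpotent (m : LeibnizMul K A) : Prop := ∃ n, m.lcsIn ⊤ n = ⊥

/-- `S` is a subalgebra: a subspace closed under multiplication. -/
def IsSubalg (m : LeibnizMul K A) (S : Submodule K A) : Prop :=
  ∀ x ∈ S, ∀ y ∈ S, m.mul x y ∈ S

/-- `S` is a (two-sided) ideal. -/
def IsIdeal (m : LeibnizMul K A) (S : Submodule K A) : Prop :=
  ∀ (x : A), ∀ y ∈ S, m.mul x y ∈ S ∧ m.mul y x ∈ S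

/-- `M` is a maximal (proper) subalgebra. -/
def IsMaxSubalg (m : LeibnizMul K A) (M : Submodule K A) : Prop :=
  m.IsSubalg M ∧ M ≠ ⊤ ∧ ∀ S, m.IsSubalg S → M < S → S = ⊤

/-- The Frattini subalgebra: the intersection of all maximal subalgebras. -/
def frattini (m : LeibnizMul K A) : Submodule K A :=
  sInf {M | m.IsMaxSubalg M}

/-- The subalgebra generated by a single element `a`. -/
def subalgGen (m : LeibnizMul K A) (a : A) : Submodule K A :=
  sInf {S | m.IsSubalg S ∧ a ∈ S}

/-- The normal closure of a subspace: the smallest ideal containing it. -/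
def normalClosure (m : LeibnizMul K A) (S : Submodule K A) : Submodule K A :=
  sInf {I | m.IsIdeal I ∧ S ≤ I}

/-- The normalizer of a subspace `C`: all `x` with `x·c ∈ C` and `c·x ∈ C` for all `c ∈ C`. -/
def normalizer (m : LeibnizMul K A) (C : Submodule K A) : Submodule K A :=
  ⨅ c : C, (Submodule.comap (m.mul.flip (c : A)) C ⊓ Submodule.comap (m.mul (c : A)) C)

/-- The center of the subalgebra `S`: all `z ∈ S` with `z·x = x·z = 0` for all `x ∈ S`. -/
def centerIn (m : LeibnizMul K A) (S : Submodule K A) : Submodule K A :=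
  S ⊓ ⨅ x : S, (LinearMap.ker (m.mul.flip (x : A)) ⊓ LinearMap.ker (m.mul (x : A)))

/-- All `z ∈ S` with `z·x ∈ T` and `x·z ∈ T` for all `x ∈ S`. -/
def relCentralizer (m : LeibnizMul K A) (S T : Submodule K A) : Submodule K A :=
  S ⊓ ⨅ x : S, (Submodule.comap (m.mul.flip (x : A)) T ⊓ Submodule.comap (m.mul (x : A)) T)

/-- The upper central series of the subalgebra `S`:
`Z₀ = 0`, `Z_{j+1} = {z ∈ S : zS ⊆ Z_j and Sz ⊆ Z_j}`. -/
def ucsIn (m : LeibnizMul K A) (S : Submodule K A) : ℕ → Submodule K A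
  | 0 => ⊥
  | (j+1) => m.relCentralizer S (m.ucsIn S j)

/-- The right center `{r : A·r = 0}`. -/
def rightCenter (m : LeibnizMul K A) : Submodule K A := LinearMap.ker m.mul.flip

/-- Left-normed powers of `a`: `lpow m a k = a^(k+1)`. -/
def lpow (m : LeibnizMul K A) (a : A) : ℕ → A
  | 0 => a
  | (k+1) => m.mul a (m.lpow a k)

/-- The Fitting null component of left multiplication by `a`. -/
def fittingNull (m : LeibnizMul K A) (a : A) : Submodule K A :=
  ⨆ k, LinearMap.ker ((m.mul a) ^ k)

end LeibnizMul

/-!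
If `A` is nilpotent and `S + A² = A`, then multiplying out `A² = (S + Aⁿ)(S + Aⁿ)` and using
`Aⁿ A ⊆ Aⁿ⁺¹` improves `S + Aⁿ = A` to `S + Aⁿ⁺¹ = A` for a subalgebra `S`, so that `S = A` by
induction. Conversely, left multiplication by `a` is a derivation, so its Fitting null component is
a subalgebra; the complementary Fitting component lies in `a A ⊆ A²`. If no proper subalgebra
supplements `A²`, the null component is therefore all of `A`, i.e. `a` acts nilpotently from the
left. Engel's theorem for the Lie algebra of left multiplications then shows that `A` is nilpotent.
-/

section Endomorphism

open Filter

theorem pow_add_apply_eq_zero_of_leibniz {R M N P : Type*} [CommSemiring R]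
    [AddCommMonoid M] [Module R M] [AddCommMonoid N] [Module R N] [AddCommMonoid P] [Module R P]
    {B : M →ₗ[R] N →ₗ[R] P} {f : Module.End R M} {g : Module.End R N} {h : Module.End R P}
    (hB : ∀ x y, h (B x y) = B (f x) y + B x (g y)) {k l : ℕ} {x : M} {y : N}
    (hx : (f ^ k) x = 0) (hy : (g ^ l) y = 0) : (h ^ (k + l)) (B x y) = 0 := by
  induction k generalizing l x y with
  | zero =>
    obtain rfl : x = 0 := hx
    rw [map_zero, LinearMap.zero_apply, map_zero]
  | succ k ihk =>
    induction l generalizing y with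
    | zero =>
      obtain rfl : y = 0 := hy
      rw [map_zero, map_zero]
    | succ l ihl =>
      have hfx : (h ^ (k + (l + 1))) (B (f x) y) = 0 :=
        ihk (by rwa [pow_succ, Module.End.mul_apply] at hx) hy
      have hgy : (h ^ (k + 1 + l)) (B x (g y)) = 0 :=
        ihl (by rwa [pow_succ, Module.End.mul_apply] at hy)
      rw [← add_assoc, pow_succ, Module.End.mul_apply, hB, map_add, hgy, add_zero,
        add_right_comm, add_assoc, hfx]

variable {R M : Type*} [Ring R] [AddCommGroup M] [Module R M]

theorem iSup_ker_pow_sup_range_eq_top [IsArtinian R M] (f : Module.End R M) :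
    (⨆ n, ker (f ^ n)) ⊔ range f = ⊤ := by
  obtain ⟨n, hcodisj, hn⟩ :=
    (f.eventually_codisjoint_ker_pow_range_pow.and (eventually_ge_atTop 1)).exists
  have hrange : range (f ^ n) ≤ range f :=
    pow_one f ▸ f.iterateRange.monotone hn
  exact (hcodisj.mono (le_iSup (fun k ↦ LinearMap.ker (f ^ k)) n) hrange).eq_top

theorem isNilpotent_of_iSup_ker_pow_eq_top [IsNoetherian R M] {f : Module.End R M}
    (hf : ⨆ n, ker (f ^ n) = ⊤) : IsNilpotent f := by
  obtain ⟨n, hn⟩ := f.eventually_iSup_ker_pow_eq.exists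
  exact ⟨n, ker_eq_top.1 (hn.symm.trans hf)⟩

end Endomorphism

namespace LeibnizMul

variable {K A : Type*} [Field K] [AddCommGroup A] [Module K A] (m : LeibnizMul K A)
  {S T U V : Submodule K A}

theorem mulSub_eq_map₂ (S T : Submodule K A) : m.mulSub S T = Submodule.map₂ m.mul S T :=
  (Submodule.map₂_eq_span_image2 m.mul S T).symm

variable {m} in
theorem mulSub_le : m.mulSub S T ≤ U ↔ ∀ x ∈ S, ∀ y ∈ T, m.mul x y ∈ U := by
  rw [mulSub_eq_map₂, Submodule.map₂_le]

theorem mul_mem_mulSub {x y : A} (hx : x ∈ S) (hy : y ∈ T) : m.mul x y ∈ m.mulSub S T :=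
  mulSub_le.1 le_rfl x hx y hy

theorem mulSub_mono (hSU : S ≤ U) (hTV : T ≤ V) : m.mulSub S T ≤ m.mulSub U V :=
  mulSub_le.2 fun _ hx _ hy ↦ m.mul_mem_mulSub (hSU hx) (hTV hy)

theorem sup_mulSub (S T U : Submodule K A) :
    m.mulSub (S ⊔ T) U = m.mulSub S U ⊔ m.mulSub T U := by
  simp only [mulSub_eq_map₂, Submodule.map₂_sup_left]

theorem mulSub_sup (S T U : Submodule K A) :
    m.mulSub S (T ⊔ U) = m.mulSub S T ⊔ m.mulSub S U := by
  simp only [mulSub_eq_map₂, Submodule.map₂_sup_right]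

theorem mulSub_mulSub_le (S T U : Submodule K A) :
    m.mulSub (m.mulSub S T) U ≤ m.mulSub S (m.mulSub T U) ⊔ m.mulSub T (m.mulSub S U) := by
  suffices ∀ z ∈ U, m.mulSub S T ≤
      (m.mulSub S (m.mulSub T U) ⊔ m.mulSub T (m.mulSub S U)).comap (m.mul.flip z) from
    mulSub_le.2 fun w hw z hz ↦ this z hz hw
  refine fun z hz ↦ mulSub_le.2 fun x hx y hy ↦ ?_
  rw [Submodule.mem_comap, flip_apply, eq_sub_of_add_eq (m.leibniz x y z).symm]
  exact Submodule.sub_mem_sup (m.mul_mem_mulSub hx (m.mul_mem_mulSub hy hz))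
    (m.mul_mem_mulSub hy (m.mul_mem_mulSub hx hz))

theorem mulSub_lcsIn_lcsIn_le (S : Submodule K A) (n k : ℕ) :
    m.mulSub (m.lcsIn S n) (m.lcsIn S k) ≤ m.lcsIn S (n + k + 1) := by
  induction n generalizing k with
  | zero => rw [Nat.zero_add]; exact le_rfl
  | succ n ih =>
    rw [Nat.add_right_comm n 1 k]
    calc m.mulSub (m.mulSub S (m.lcsIn S n)) (m.lcsIn S k)
        ≤ m.mulSub S (m.mulSub (m.lcsIn S n) (m.lcsIn S k)) ⊔
            m.mulSub (m.lcsIn S n) (m.lcsIn S (k + 1)) := m.mulSub_mulSub_le S _ _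
      _ ≤ m.lcsIn S (n + k + 1 + 1) := sup_le (m.mulSub_mono le_rfl (ih k)) (ih (k + 1))

variable {m} in
theorem IsSubalg.sup_lcsIn_eq (hS : m.IsSubalg S) (h : S ⊔ m.mulSub T T = T) (n : ℕ) :
    S ⊔ m.lcsIn T n = T := by
  obtain ⟨hST, hTT⟩ : S ≤ T ∧ m.mulSub T T ≤ T := sup_le_iff.1 h.le
  induction n with
  | zero => exact sup_eq_right.2 hST
  | succ n ih =>
    have hL : m.lcsIn T n ≤ T := le_sup_right.trans ih.le
    have hsq : m.mulSub T T ≤ S ⊔ m.lcsIn T (n + 1) := calc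
      m.mulSub T T = m.mulSub S (S ⊔ m.lcsIn T n) ⊔ m.mulSub (m.lcsIn T n) T := by
        rw [ih, ← sup_mulSub, ih]
      _ = m.mulSub S S ⊔ m.mulSub S (m.lcsIn T n) ⊔ m.mulSub (m.lcsIn T n) T := by
        rw [mulSub_sup]
      _ ≤ S ⊔ m.lcsIn T (n + 1) :=
        sup_le (sup_le_sup (mulSub_le.2 hS) (m.mulSub_mono hST le_rfl))
          (le_sup_of_le_right (m.mulSub_lcsIn_lcsIn_le T n 0))
    exact le_antisymm (sup_le hST ((m.mulSub_mono le_rfl hL).trans hTT))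
      (h.ge.trans (sup_le le_sup_left hsq))

variable {m} in
theorem mem_fittingNull {a x : A} : x ∈ m.fittingNull a ↔ ∃ k, (m.mul a ^ k) x = 0 :=
  Submodule.mem_iSup_of_chain (m.mul a).iterateKer x

theorem isSubalg_fittingNull (a : A) : m.IsSubalg (m.fittingNull a) := by
  intro x hx y hy
  obtain ⟨k, hk⟩ := mem_fittingNull.1 hx
  obtain ⟨l, hl⟩ := mem_fittingNull.1 hy
  exact mem_fittingNull.2 ⟨k + l, pow_add_apply_eq_zero_of_leibniz (m.leibniz a) hk hl⟩

theorem fittingNull_sup_mulSub_top_eq_top [FiniteDimensional K A] (a : A) :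
    m.fittingNull a ⊔ m.mulSub ⊤ ⊤ = ⊤ := by
  have hrange : range (m.mul a) ≤ m.mulSub ⊤ ⊤ := by
    rintro _ ⟨y, rfl⟩
    exact m.mul_mem_mulSub Submodule.mem_top Submodule.mem_top
  exact top_le_iff.1 ((iSup_ker_pow_sup_range_eq_top (m.mul a)).ge.trans
    (sup_le_sup_left hrange _))

section Engel

attribute [local instance] LieRing.ofAssociativeRing

/-- The Lie subalgebra of `Module.End K A` formed by the left multiplications of `A`. It makes `A`
a Lie module, to which Engel's theorem for Lie algebras applies. -/
def mulRange : LieSubalgebra K (Module.End K A) where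
  __ := range m.mul
  lie_mem' := by
    rintro _ _ ⟨x, rfl⟩ ⟨y, rfl⟩
    refine ⟨m.mul x y, LinearMap.ext fun z ↦ ?_⟩
    rw [Ring.lie_def, LinearMap.sub_apply, Module.End.mul_apply, Module.End.mul_apply,
      m.leibniz x y z, add_sub_cancel_right]

theorem toSubmodule_lowerCentralSeries_mulRange (n : ℕ) :
    (LieModule.lowerCentralSeries K m.mulRange A n).toSubmodule = m.lcsIn ⊤ n := by
  induction n with
  | zero => rfl
  | succ n ih =>
    rw [LieModule.lowerCentralSeries_succ, LieSubmodule.lieIdeal_oper_eq_linear_span']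
    simp only [← LieSubmodule.mem_toSubmodule, ih]
    refine le_antisymm (Submodule.span_le.2 ?_) (mulSub_le.2 fun x _ y hy ↦ ?_)
    · rintro _ ⟨⟨_, x, rfl⟩, -, y, hy, rfl⟩
      exact m.mul_mem_mulSub Submodule.mem_top hy
    · exact Submodule.subset_span ⟨⟨m.mul x, x, rfl⟩, Submodule.mem_top, y, hy, rfl⟩

theorem isNilpotent_iff_isNilpotent_mulRange :
    m.IsNilpotent ↔ LieModule.IsNilpotent m.mulRange A := by
  simp only [LeibnizMul.IsNilpotent, LieModule.isNilpotent_iff K,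
    ← LieSubmodule.toSubmodule_eq_bot, toSubmodule_lowerCentralSeries_mulRange]

theorem isNilpotent_iff_forall_isNilpotent_mul [FiniteDimensional K A] :
    m.IsNilpotent ↔ ∀ a, _root_.IsNilpotent (m.mul a) := by
  rw [isNilpotent_iff_isNilpotent_mulRange, LieModule.isNilpotent_iff_forall' (R := K)]
  exact ⟨fun h a ↦ h ⟨m.mul a, a, rfl⟩, by rintro h ⟨_, a, rfl⟩; exact h a⟩

end Engel

end LeibnizMul

/-- `A` is nilpotent iff the only subalgebra `S` with `S + A² = A` is `S = A`. -/
theorem stmt2 {K A : Type*} [Field K] [AddCommGroup A] [Module K A] [FiniteDimensional K A]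
    (m : LeibnizMul K A) :
    m.IsNilpotent ↔ ∀ S : Submodule K A, m.IsSubalg S → S ⊔ m.mulSub ⊤ ⊤ = ⊤ → S = ⊤ := by
  constructor
  · rintro ⟨n, hn⟩ S hS hSA
    rw [← hS.sup_lcsIn_eq hSA n, hn, sup_bot_eq]
  · intro h
    refine m.isNilpotent_iff_forall_isNilpotent_mul.2 fun a ↦ ?_
    have hnull : m.fittingNull a = ⊤ :=
      h _ (m.isSubalg_fittingNull a) (m.fittingNull_sup_mulSub_top_eq_top a)
    exact isNilpotent_of_iSup_ker_pow_eq_top hnull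
end

section
/- Let A be a finite-dimensional cyclic left Leibniz algebra generated by a, with p(x) the characteristic polynomial of left multiplication L_a. Then the Frattini subalgebra Φ(A) = 0 if and only if p(x) is a product of distinct irreducible factors (i.e., p is squarefree). -/
open Polynomial LinearMap

/-!
In a Leibniz algebra `L_{xy} = [L_x, L_y]`, so the elements whose left multiplication is a multiple
of `L_a` form a subalgebra. When `a` generates `A`, every left multiplication is therefore a
multiple of `L_a`, and `L_{xy} = 0` for all `x`, `y`. Hence every `L_a`-invariant subspace is a
subalgebra. Conversely, `A = Ka + L_a A` with `L_a A` acting trivially from the left, so a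
subalgebra not contained in `L_a A` has an element acting as a nonzero multiple of `L_a` and is
invariant. The maximal subalgebras are thus the maximal `L_a`-invariant subspaces, and `Φ(A)` is
the Jacobson radical of `A` as a `K[X]`-module with `X` acting as `L_a`. It vanishes iff `L_a` is
semisimple, iff the minimal polynomial of `L_a` is squarefree, and this polynomial is the
characteristic polynomial because `a` is a cyclic vector of `L_a`.
-/

section Endomorphism

open Module

section Semiring

variable {R M : Type*} [CommSemiring R] [AddCommMonoid M] [Module R M]

theorem range_mem_invtSubmodule (f : End R M) : range f ∈ f.invtSubmodule :=
  fun x _ ↦ mem_range_self f x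

/-- A vector `v` is cyclic for the endomorphism `f` if no proper `f`-invariant submodule contains
it, i.e. if `v` generates `M` as an `R[X]`-module with `X` acting as `f`. -/
def IsCyclicVector (f : End R M) (v : M) : Prop :=
  ∀ p ∈ f.invtSubmodule, v ∈ p → p = ⊤

theorem IsCyclicVector.span_singleton_sup_range_eq_top {f : End R M} {v : M}
    (hv : IsCyclicVector f v) : (R ∙ v) ⊔ range f = ⊤ :=
  hv _ (fun x _ ↦ Submodule.mem_sup_right (mem_range_self f x))
    (Submodule.mem_sup_left (Submodule.mem_span_singleton_self v))

theorem IsCyclicVector.exists_aeval_apply_eq {f : End R M} {v : M} (hv : IsCyclicVector f v)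
    (w : M) : ∃ q : R[X], aeval f q v = w := by
  let φ : R[X] →ₗ[R] M := LinearMap.applyₗ v ∘ₗ (aeval f).toLinearMap
  have hinv : range φ ∈ f.invtSubmodule := by
    rintro _ ⟨q, rfl⟩
    exact ⟨X * q, by simp [φ]⟩
  exact range_eq_top.mp (hv _ hinv ⟨1, by simp [φ]⟩) w

end Semiring

section Ring

variable {R M : Type*} [CommRing R] [AddCommGroup M] [Module R M] {f : End R M}

theorem mem_degreeLT_finrank_iff_degree_lt_charpoly [Nontrivial R] [Module.Finite R M]
    [Module.Free R M] (f : End R M) {q : R[X]} :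
    q ∈ degreeLT R (finrank R M) ↔ q.degree < f.charpoly.degree := by
  rw [mem_degreeLT, ← f.charpoly_natDegree, ← degree_eq_natDegree f.charpoly_monic.ne_zero]

namespace IsCyclicVector

variable {v : M}

theorem exists_mem_degreeLT_aeval_apply_eq [Nontrivial R] [Module.Finite R M]
    [Module.Free R M] (hv : IsCyclicVector f v) (w : M) :
    ∃ q ∈ degreeLT R (finrank R M), aeval f q v = w := by
  obtain ⟨q, rfl⟩ := hv.exists_aeval_apply_eq w
  exact ⟨q %ₘ f.charpoly,
    (mem_degreeLT_finrank_iff_degree_lt_charpoly f).mpr (degree_modByMonic_lt q f.charpoly_monic),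
    by rw [aeval_modByMonic_eq_self_of_root f.aeval_self_charpoly]⟩

theorem eq_zero_of_mem_degreeLT_of_aeval_apply_eq_zero [Module.Finite R M] [Module.Free R M]
    (hv : IsCyclicVector f v) {q : R[X]} (hq : q ∈ degreeLT R (finrank R M))
    (hqv : aeval f q v = 0) : q = 0 := by
  nontriviality R
  let φ : degreeLT R (finrank R M) →ₗ[R] M :=
    LinearMap.applyₗ v ∘ₗ (aeval f).toLinearMap ∘ₗ (degreeLT R (finrank R M)).subtype
  have hsurj : Function.Surjective φ := fun w ↦ by
    obtain ⟨q, hq, rfl⟩ := hv.exists_mem_degreeLT_aeval_apply_eq w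
    exact ⟨⟨q, hq⟩, rfl⟩
  let e : degreeLT R (finrank R M) ≃ₗ[R] M :=
    degreeLTEquiv R (finrank R M) ≪≫ₗ (finBasis R M).equivFun.symm
  have : Module.Finite R (degreeLT R (finrank R M)) := .equiv e.symm
  have hinj : Function.Injective φ :=
    OrzechProperty.injective_of_surjective_of_injective e.toLinearMap φ e.injective hsurj
  exact congrArg Subtype.val (hinj (a₁ := ⟨q, hq⟩) (hqv.trans (map_zero φ).symm))

theorem minpoly_eq_charpoly [Module.Finite R M] [Module.Free R M] (hv : IsCyclicVector f v) :
    minpoly R f = f.charpoly := by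
  nontriviality R
  refine (minpoly.unique' R f f.charpoly_monic f.aeval_self_charpoly fun q hq ↦ ?_).symm
  refine or_iff_not_imp_right.mpr fun hqf ↦ hv.eq_zero_of_mem_degreeLT_of_aeval_apply_eq_zero
    ((mem_degreeLT_finrank_iff_degree_lt_charpoly f).mpr hq) ?_
  rw [not_not.mp hqf, LinearMap.zero_apply]

end IsCyclicVector

theorem mem_sInf_isCoatom_invtSubmodule_iff_mem_jacobson {x : M} :
    x ∈ sInf ((↑) '' {p : f.invtSubmodule | IsCoatom p} : Set (Submodule R M)) ↔
      AEval'.of f x ∈ jacobson R[X] (AEval' f) := by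
  let e := AEval.mapSubmodule R M f
  simp only [jacobson, Submodule.mem_sInf, Set.forall_mem_image]
  constructor
  · exact fun h N hN ↦ h ((e.symm.isCoatom_iff N).mpr hN)
  · exact fun h p hp ↦
      (AEval.mem_mapSubmodule_apply R M f).mp (h (e p) ((e.isCoatom_iff p).mpr hp))

theorem isSemisimple_iff_sInf_isCoatom_invtSubmodule_eq_bot [IsArtinian R M] :
    f.IsSemisimple ↔
      sInf ((↑) '' {p : f.invtSubmodule | IsCoatom p} : Set (Submodule R M)) = ⊥ := by
  have : IsArtinian R (AEval' f) := inferInstanceAs (IsArtinian R M)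
  have : IsArtinian R[X] (AEval' f) := isArtinian_of_tower R this
  rw [End.IsSemisimple, IsArtinian.isSemisimpleModule_iff_jacobson, Submodule.eq_bot_iff,
    Submodule.eq_bot_iff, (AEval'.of f).surjective.forall]
  simp only [mem_sInf_isCoatom_invtSubmodule_iff_mem_jacobson, EmbeddingLike.map_eq_zero_iff]

end Ring

theorem isSemisimple_iff_squarefree_minpoly {K V : Type*} [Field K] [AddCommGroup V] [Module K V]
    [FiniteDimensional K V] {f : End K V} : f.IsSemisimple ↔ Squarefree (minpoly K f) :=
  ⟨fun h ↦ h.minpoly_squarefree,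
    fun h ↦ End.isSemisimple_of_squarefree_aeval_eq_zero h (minpoly.aeval K f)⟩

end Endomorphism

namespace LeibnizMul

variable {K A : Type*} [Field K] [AddCommGroup A] [Module K A] {m : LeibnizMul K A} {a : A}
  {S M : Submodule K A}

theorem mul_mul_eq_zero_of_commute {x y : A}
    (h : Commute (m.mul x : Module.End K A) (m.mul y)) : m.mul (m.mul x y) = 0 :=
  LinearMap.ext fun z ↦
    right_eq_add.mp ((LinearMap.congr_fun h.eq z).symm.trans (m.leibniz x y z))

theorem IsSubalg.eq_top_of_mem (hS : m.IsSubalg S) (hcyc : m.subalgGen a = ⊤) (ha : a ∈ S) :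
    S = ⊤ :=
  top_le_iff.mp (hcyc ▸ sInf_le ⟨hS, ha⟩)

theorem exists_smul_mul_eq_mul (hcyc : m.subalgGen a = ⊤) (x : A) :
    ∃ c : K, c • m.mul a = m.mul x := by
  suffices h : (K ∙ m.mul a).comap m.mul = ⊤ from
    Submodule.mem_span_singleton.mp (h.ge (Submodule.mem_top (x := x)))
  refine IsSubalg.eq_top_of_mem (fun x hx y hy ↦ ?_) hcyc (Submodule.mem_span_singleton_self _)
  obtain ⟨c, hc⟩ := Submodule.mem_span_singleton.mp hx
  obtain ⟨d, hd⟩ := Submodule.mem_span_singleton.mp hy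
  have hcomm : Commute (m.mul x : Module.End K A) (m.mul y) :=
    hc ▸ hd ▸ ((Commute.refl (m.mul a : Module.End K A)).smul_left c).smul_right d
  rw [Submodule.mem_comap, mul_mul_eq_zero_of_commute hcomm]
  exact Submodule.zero_mem _

theorem mul_mul_generator (hcyc : m.subalgGen a = ⊤) (x : A) : m.mul (m.mul a x) = 0 := by
  obtain ⟨c, hc⟩ := exists_smul_mul_eq_mul hcyc x
  have hcomm : Commute (m.mul a : Module.End K A) (m.mul x) :=
    hc ▸ (Commute.refl (m.mul a : Module.End K A)).smul_right c
  exact mul_mul_eq_zero_of_commute hcomm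

theorem isSubalg_of_mem_invtSubmodule (hcyc : m.subalgGen a = ⊤)
    (hS : S ∈ Module.End.invtSubmodule (m.mul a)) : m.IsSubalg S := fun x _ y hy ↦ by
  obtain ⟨c, hc⟩ := exists_smul_mul_eq_mul hcyc x
  rw [← hc]
  exact S.smul_mem c (hS hy)

theorem isCyclicVector_mul_generator (hcyc : m.subalgGen a = ⊤) : IsCyclicVector (m.mul a) a :=
  fun _ hS ha ↦ (isSubalg_of_mem_invtSubmodule hcyc hS).eq_top_of_mem hcyc ha

theorem isSubalg_range_mul_generator (hcyc : m.subalgGen a = ⊤) : m.IsSubalg (range (m.mul a)) :=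
  isSubalg_of_mem_invtSubmodule hcyc (range_mem_invtSubmodule _)

theorem range_mul_generator_ne_top [Nontrivial A] (hcyc : m.subalgGen a = ⊤) :
    range (m.mul a) ≠ ⊤ := fun htop ↦ by
  obtain ⟨t, ht⟩ := range_eq_top.mp htop a
  have hzero : m.mul a = 0 := ht ▸ mul_mul_generator hcyc t
  rw [hzero, range_zero] at htop
  exact bot_ne_top htop

theorem IsSubalg.mem_invtSubmodule_of_not_le_range (hS : m.IsSubalg S)
    (hcyc : m.subalgGen a = ⊤) (hle : ¬S ≤ range (m.mul a)) :
    S ∈ Module.End.invtSubmodule (m.mul a) := fun y hy ↦ by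
  obtain ⟨x, hxS, hxr⟩ := SetLike.not_le_iff_exists.mp hle
  have hx : x ∈ (K ∙ a) ⊔ range (m.mul a) :=
    (isCyclicVector_mul_generator hcyc).span_singleton_sup_range_eq_top ▸ Submodule.mem_top
  obtain ⟨_, hca, _, ⟨t, rfl⟩, rfl⟩ := Submodule.mem_sup.mp hx
  obtain ⟨c, rfl⟩ := Submodule.mem_span_singleton.mp hca
  have hc : c ≠ 0 := by
    rintro rfl
    exact hxr ⟨t, by rw [zero_smul, zero_add]⟩
  have hmul : m.mul (c • a + m.mul a t) y = c • m.mul a y := by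
    rw [map_add, map_smul, mul_mul_generator hcyc, add_zero, LinearMap.smul_apply]
  exact (S.smul_mem_iff hc).mp (hmul ▸ hS _ hxS y hy)

theorem IsMaxSubalg.mem_invtSubmodule (hM : m.IsMaxSubalg M) (hcyc : m.subalgGen a = ⊤) :
    M ∈ Module.End.invtSubmodule (m.mul a) := by
  obtain ⟨hsub, hne, hmax⟩ := hM
  have : Nontrivial A := Submodule.nontrivial_iff K |>.mp ⟨M, ⊤, hne⟩
  by_cases hle : M ≤ range (m.mul a)
  · obtain rfl : M = range (m.mul a) := hle.eq_of_not_lt fun hlt ↦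
      range_mul_generator_ne_top hcyc (hmax _ (isSubalg_range_mul_generator hcyc) hlt)
    exact range_mem_invtSubmodule _
  · exact hsub.mem_invtSubmodule_of_not_le_range hcyc hle

theorem IsMaxSubalg.isCoatom (hM : m.IsMaxSubalg M) (hcyc : m.subalgGen a = ⊤) :
    IsCoatom (⟨M, hM.mem_invtSubmodule hcyc⟩ : Module.End.invtSubmodule (m.mul a)) :=
  ⟨fun h ↦ hM.2.1 (congrArg Subtype.val h), fun S hlt ↦
    Subtype.ext (hM.2.2 S (isSubalg_of_mem_invtSubmodule hcyc S.2) hlt)⟩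

theorem isMaxSubalg_of_isCoatom (hcyc : m.subalgGen a = ⊤)
    {p : Module.End.invtSubmodule (m.mul a)} (hp : IsCoatom p) : m.IsMaxSubalg p := by
  have hne : (p : Submodule K A) ≠ ⊤ := fun h ↦ hp.1 (Subtype.ext h)
  have hmax : ∀ S ∈ Module.End.invtSubmodule (m.mul a), ↑p < S → S = ⊤ := fun S hS hlt ↦
    congrArg Subtype.val (hp.2 ⟨S, hS⟩ hlt)
  have : Nontrivial A := Submodule.nontrivial_iff K |>.mp ⟨p, ⊤, hne⟩
  refine ⟨isSubalg_of_mem_invtSubmodule hcyc p.2, hne, fun S hS hlt ↦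
    hmax S (hS.mem_invtSubmodule_of_not_le_range hcyc fun hle ↦ ?_) hlt⟩
  exact range_mul_generator_ne_top hcyc
    (hmax _ (range_mem_invtSubmodule _) (hlt.trans_le hle))

theorem setOf_isMaxSubalg_eq (hcyc : m.subalgGen a = ⊤) :
    {M | m.IsMaxSubalg M} = (↑) '' {p : Module.End.invtSubmodule (m.mul a) | IsCoatom p} := by
  ext M
  constructor
  · exact fun hM ↦ ⟨⟨M, hM.mem_invtSubmodule hcyc⟩, hM.isCoatom hcyc, rfl⟩
  · rintro ⟨p, hp, rfl⟩
    exact isMaxSubalg_of_isCoatom hcyc hp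

end LeibnizMul

/-- for a cyclic Leibniz algebra generated by `a`, the Frattini
subalgebra is zero iff the characteristic polynomial of `L_a` is squarefree. -/
theorem stmt10 {K A : Type*} [Field K] [AddCommGroup A] [Module K A] [FiniteDimensional K A]
    (m : LeibnizMul K A) (a : A) (hcyc : m.subalgGen a = ⊤) :
    m.frattini = ⊥ ↔ Squarefree (LinearMap.charpoly (m.mul a)) := by
  rw [LeibnizMul.frattini, LeibnizMul.setOf_isMaxSubalg_eq hcyc,
    ← isSemisimple_iff_sInf_isCoatom_invtSubmodule_eq_bot, isSemisimple_iff_squarefree_minpoly,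
    (LeibnizMul.isCyclicVector_mul_generator hcyc).minpoly_eq_charpoly]
end
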